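/- arXiv:2405.11995 — 5 statements merged into one kernel-verified Lean document; each statement's English description precedes it below -/
import Mathlib

section
/- In the follow-policy setting, let B be a braking function and C a speed control function for B. Assume v_e ≤ V_e, B(v_e) ≤ x_i + B(V_i) for every i ∈ {1,…,k}, and B(v_e) ≤ X, and let (Δv, Δd) := C(v_e, VL) for VL := ⟨(0, V_e), (x_1, V_1), …, (x_k, V_k), (X, 0)⟩. Then: (4) v_e + Δv ≤ V_e if 0 ≤ Δd < x_1; (5) v_e + Δv ≤ V_i if x_i ≤ Δd < x_{i+1} for some i ∈ {1,…,k} (with x_{k+1} := X); (6) Δd + B(v_e + Δv) ≤ x_i + B(V_i) for every i ∈ {1,…,k} with Δd ≤ x_i; and (7) Δd + B(v_e + Δv) ≤ X. -/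
/-!
The speed `ve` is controllable for the constraint list of the follow policy: the bound for
the first entry `(0, Ve)` is `ve ≤ Ve` transported along the monotone `B`, and the bound for the
last entry `(X, 0)` is `B ve ≤ X` because `B 0 = 0`. The guarantees of the speed control function
then give the conclusions entry by entry. The bound at `X` needs no proviso `Δd ≤ X`, since a zero
limit at `X` already keeps `Δd` from exceeding `X`.
-/

/-- A braking function: `B 0 = 0`, `B` nonnegative on nonnegative speeds, and strictly
increasing on nonnegative reals. -/
def IsBraking (B : ℝ → ℝ) : Prop :=
  B 0 = 0 ∧ (∀ v, 0 ≤ v → 0 ≤ B v) ∧ ∀ v₁ v₂, v₂ < v₁ → 0 ≤ v₂ → B v₂ < B v₁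

/-- A speed `v` is controllable with respect to a speed-limit constraint list `VL`
(for the braking function `B`) if `B v ≤ d + B V` for every constraint `(d, V)` in `VL`. -/
def Controllable (B : ℝ → ℝ) (v : ℝ) (VL : List (ℝ × ℝ)) : Prop :=
  ∀ p ∈ VL, B v ≤ p.1 + B p.2

/-- A valid speed-limit constraint list: nonempty, first distance is 0, distances strictly
increasing, all speed limits nonnegative. -/
def ValidVL (VL : List (ℝ × ℝ)) : Prop :=
  VL ≠ [] ∧ (∀ h : 0 < VL.length, (VL.get ⟨0, h⟩).1 = 0) ∧
    List.Chain' (· < ·) (VL.map Prod.fst) ∧ ∀ p ∈ VL, 0 ≤ p.2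

/-- A speed control function for a braking function `B`: for every controllable pair
`(v, VL)` it returns `(Δv, Δd)` with `v + Δv ≥ 0`, `Δd ≥ 0`, such that for all `i`:
(i) `v + Δv ≤ V_i` whenever `d_i ≤ Δd < d_{i+1}` (with `d_{n+1} = +∞`);
(ii) `Δd + B (v + Δv) ≤ d_i + B V_i` whenever `Δd ≤ d_i`;
(iii) `Δd ≤ d_i` whenever `V_i = 0`. -/
def IsSpeedControl (B : ℝ → ℝ) (C : ℝ → List (ℝ × ℝ) → ℝ × ℝ) : Prop :=
  ∀ v VL, 0 ≤ v → ValidVL VL → Controllable B v VL →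
    0 ≤ v + (C v VL).1 ∧ 0 ≤ (C v VL).2 ∧
    (∀ i : Fin VL.length, (VL.get i).1 ≤ (C v VL).2 →
      (∀ h : (i : ℕ) + 1 < VL.length, (C v VL).2 < (VL.get ⟨(i : ℕ) + 1, h⟩).1) →
      v + (C v VL).1 ≤ (VL.get i).2) ∧
    (∀ p ∈ VL, (C v VL).2 ≤ p.1 → (C v VL).2 + B (v + (C v VL).1) ≤ p.1 + B p.2) ∧
    (∀ p ∈ VL, p.2 = 0 → (C v VL).2 ≤ p.1)

theorem IsBraking.map_zero {B : ℝ → ℝ} (hB : IsBraking B) : B 0 = 0 :=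
  hB.1

theorem IsBraking.strictMonoOn {B : ℝ → ℝ} (hB : IsBraking B) : StrictMonoOn B (Set.Ici 0) :=
  fun _ hv _ _ hvw => hB.2.2 _ _ hvw hv

theorem validVL_cons_iff {p : ℝ × ℝ} {VL : List (ℝ × ℝ)} :
    ValidVL (p :: VL) ↔
      p.1 = 0 ∧ (p :: VL).Pairwise (fun q r => q.1 < r.1) ∧ ∀ q ∈ p :: VL, 0 ≤ q.2 := by
  have chain_iff : List.IsChain (· < ·) ((p :: VL).map Prod.fst) ↔
      (p :: VL).Pairwise (fun q r => q.1 < r.1) := by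
    rw [List.isChain_iff_pairwise, List.pairwise_map]
  exact ⟨fun ⟨_, hzero, hchain, hnonneg⟩ => ⟨hzero (by simp), chain_iff.1 hchain, hnonneg⟩,
    fun ⟨hzero, hpair, hnonneg⟩ =>
      ⟨List.cons_ne_nil _ _, fun _ => hzero, chain_iff.2 hpair, hnonneg⟩⟩

namespace IsSpeedControl

variable {B : ℝ → ℝ} {C : ℝ → List (ℝ × ℝ) → ℝ × ℝ} {v : ℝ} {VL : List (ℝ × ℝ)}

theorem speed_le_getElem (hC : IsSpeedControl B C) (hv : 0 ≤ v) (hVL : ValidVL VL)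
    (hctrl : Controllable B v VL) {i : ℕ} (hi : i < VL.length) (hle : VL[i].1 ≤ (C v VL).2)
    (hlt : ∀ h : i + 1 < VL.length, (C v VL).2 < VL[i + 1].1) :
    v + (C v VL).1 ≤ VL[i].2 :=
  (hC v VL hv hVL hctrl).2.2.1 ⟨i, hi⟩ hle hlt

theorem dist_add_braking_le (hC : IsSpeedControl B C) (hv : 0 ≤ v) (hVL : ValidVL VL)
    (hctrl : Controllable B v VL) {d V : ℝ} (hmem : (d, V) ∈ VL) (hle : (C v VL).2 ≤ d) :
    (C v VL).2 + B (v + (C v VL).1) ≤ d + B V :=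
  (hC v VL hv hVL hctrl).2.2.2.1 _ hmem hle

theorem dist_add_braking_le_of_stop (hC : IsSpeedControl B C) (hv : 0 ≤ v) (hVL : ValidVL VL)
    (hctrl : Controllable B v VL) {d : ℝ} (hmem : (d, 0) ∈ VL) :
    (C v VL).2 + B (v + (C v VL).1) ≤ d + B 0 :=
  hC.dist_add_braking_le hv hVL hctrl hmem ((hC v VL hv hVL hctrl).2.2.2.2 _ hmem rfl)

end IsSpeedControl

/-- The constraint list of the follow policy: the current limit `Ve`, then the signs with limit
`Vs i` at distance `x i`, then a stop at the followed position `X`. The `i`-th sign of the paper,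
counted from 1, has index `i - 1` in `x` and `Vs` and is entry `i` of the list. -/
def followList {k : ℕ} (Ve X : ℝ) (x Vs : Fin k → ℝ) : List (ℝ × ℝ) :=
  (0, Ve) :: (List.ofFn fun i => (x i, Vs i)) ++ [(X, 0)]

section FollowList

variable {k : ℕ} {Ve X : ℝ} {x Vs : Fin k → ℝ}

theorem length_followList : (followList Ve X x Vs).length = k + 2 := by
  simp [followList]

theorem mem_followList {p : ℝ × ℝ} :
    p ∈ followList Ve X x Vs ↔ p = (0, Ve) ∨ (∃ i, (x i, Vs i) = p) ∨ p = (X, 0) := by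
  simp [followList, List.mem_ofFn]

theorem getElem_followList_succ {j : ℕ} (hj : j + 1 < (followList Ve X x Vs).length) :
    (followList Ve X x Vs)[j + 1] = if h : j < k then (x ⟨j, h⟩, Vs ⟨j, h⟩) else (X, 0) := by
  simp [followList, List.getElem_append]

theorem lt_getElem_followList_succ {d : ℝ} {j : ℕ} (hsign : ∀ h : j < k, d < x ⟨j, h⟩)
    (hlast : j = k → d < X) (hj : j + 1 < (followList Ve X x Vs).length) :
    d < (followList Ve X x Vs)[j + 1].1 := by
  rw [getElem_followList_succ]
  split_ifs with h
  · exact hsign h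
  · exact hlast (by rw [length_followList] at hj; omega)

theorem validVL_followList (hVe : 0 ≤ Ve) (hxpos : ∀ i, 0 < x i) (hxmono : StrictMono x)
    (hVs : ∀ i, 0 ≤ Vs i) (hxX : ∀ i, x i < X) (hXpos : 0 < X) :
    ValidVL (followList Ve X x Vs) := by
  refine validVL_cons_iff.2 ⟨rfl, ?_, fun p hp => ?_⟩
  · simp only [List.append_eq, List.pairwise_cons, List.pairwise_append, List.pairwise_ofFn,
      List.mem_append, List.mem_ofFn, List.mem_singleton]
    refine ⟨?_, fun i j hij => hxmono hij, by simp, ?_⟩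
    · rintro p (⟨i, rfl⟩ | rfl)
      exacts [hxpos i, hXpos]
    · rintro p ⟨i, rfl⟩ q rfl
      exact hxX i
  · rcases mem_followList.1 hp with rfl | ⟨i, rfl⟩ | rfl
    exacts [hVe, hVs i, le_rfl]

theorem controllable_followList_iff {B : ℝ → ℝ} {v : ℝ} :
    Controllable B v (followList Ve X x Vs) ↔
      B v ≤ B Ve ∧ (∀ i, B v ≤ x i + B (Vs i)) ∧ B v ≤ X + B 0 := by
  simp only [Controllable, mem_followList, or_imp, forall_and, forall_eq,
    forall_exists_index, forall_apply_eq_imp_iff, zero_add]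

end FollowList

/-- In the follow-policy setting, if `B` is a braking function, `C` a speed
control function for `B`, and the controllability conditions (1)–(3) hold, then the output
`(Δv, Δd) = C ve VL` for `VL = ⟨(0, Ve), (x 0, Vs 0), …, (x (k-1), Vs (k-1)), (X, 0)⟩`
satisfies conclusions (4)–(7), with the convention `x_{k+1} := X`. -/
theorem follow_postconditions
    (B : ℝ → ℝ) (hB : IsBraking B)
    (C : ℝ → List (ℝ × ℝ) → ℝ × ℝ) (hC : IsSpeedControl B C)
    (k : ℕ) (ve Ve X : ℝ) (x Vs : Fin k → ℝ)
    (hve : 0 ≤ ve) (hVe : 0 ≤ Ve)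
    (hxpos : ∀ i, 0 < x i) (hxmono : StrictMono x)
    (hVs : ∀ i, 0 ≤ Vs i)
    (hxX : ∀ i, x i < X) (hXpos : 0 < X)
    (h1 : ve ≤ Ve) (h2 : ∀ i, B ve ≤ x i + B (Vs i)) (h3 : B ve ≤ X) :
    ∀ Δv Δd : ℝ,
      (Δv, Δd) = C ve ((0, Ve) :: (List.ofFn fun i => (x i, Vs i)) ++ [(X, 0)]) →
      -- (4) `ve + Δv ≤ Ve` if `0 ≤ Δd < x_1`
      ((0 ≤ Δd → (∀ h : 0 < k, Δd < x ⟨0, h⟩) → (k = 0 → Δd < X) → ve + Δv ≤ Ve) ∧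
       -- (5) `ve + Δv ≤ Vs i` if `x_i ≤ Δd < x_{i+1}` (with `x_{k+1} := X`)
       (∀ i : Fin k, x i ≤ Δd →
          (∀ h : (i : ℕ) + 1 < k, Δd < x ⟨(i : ℕ) + 1, h⟩) →
          ((i : ℕ) + 1 = k → Δd < X) → ve + Δv ≤ Vs i) ∧
       -- (6) `Δd + B (ve + Δv) ≤ x i + B (Vs i)` whenever `Δd ≤ x i`
       (∀ i : Fin k, Δd ≤ x i → Δd + B (ve + Δv) ≤ x i + B (Vs i)) ∧
       -- (7) `Δd + B (ve + Δv) ≤ X`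
       (Δd + B (ve + Δv) ≤ X)) := by
  have hvalid : ValidVL (followList Ve X x Vs) :=
    validVL_followList hVe hxpos hxmono hVs hxX hXpos
  have hctrl : Controllable B ve (followList Ve X x Vs) :=
    controllable_followList_iff.2
      ⟨hB.strictMonoOn.monotoneOn hve hVe h1, h2, by rwa [hB.map_zero, add_zero]⟩
  intro Δv Δd hEq
  obtain ⟨rfl, rfl⟩ : Δv = (C ve (followList Ve X x Vs)).1 ∧ Δd = (C ve (followList Ve X x Vs)).2 :=
    Prod.ext_iff.1 hEq
  refine ⟨fun h0 hsign hlast => ?_, fun i hxi hsign hlast => ?_, fun i hle => ?_, ?_⟩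
  · exact hC.speed_le_getElem hve hvalid hctrl (i := 0) (by simp [length_followList]) h0
      (lt_getElem_followList_succ hsign fun hk => hlast hk.symm)
  · have hi : (i : ℕ) + 1 < (followList Ve X x Vs).length := by rw [length_followList]; omega
    have hget : (followList Ve X x Vs)[(i : ℕ) + 1] = (x i, Vs i) := by
      simp [getElem_followList_succ]
    simpa only [hget] using hC.speed_le_getElem hve hvalid hctrl hi (by rwa [hget])
      (lt_getElem_followList_succ hsign hlast)
  · exact hC.dist_add_braking_le hve hvalid hctrl (mem_followList.2 (.inr (.inl ⟨i, rfl⟩))) hle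
  · simpa only [hB.map_zero, add_zero] using
      hC.dist_add_braking_le_of_stop hve hvalid hctrl (mem_followList.2 (.inr (.inr rfl)))
end

section
/- The function B_ex is well-defined (the recursion terminates for every v ≥ 0) and is a braking function: B_ex(0) = 0, B_ex(v) ≥ 0 for all v ≥ 0, and B_ex(v₁) > B_ex(v₂) whenever v₁ > v₂ ≥ 0. Moreover, B_ex is continuous on [0, ∞). -/
/-!
Measuring speed in units of `bmax * Δt` turns the recursion into `φ x = x` on `[0, 1)` and
`φ x = 2 * x - 1 + φ (x - 1)`. Since `x ^ 2` satisfies the second equation too, `φ x - x ^ 2` is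
the `1`-periodic function equal to `t * (1 - t)` on `[0, 1)`, so that `φ` is the piecewise linear
interpolation of the square at the integers. Continuity holds because `t * (1 - t)` takes the same
value at `0` and `1`; monotonicity because `φ` lies above each of its chord lines, and the chord
over `[n, n + 1]` has slope `2 * n + 1`.
-/

open Int Set

lemma nonneg_induction_of_sub {G : Type*} [AddCommGroup G] [LinearOrder G] [IsOrderedAddMonoid G]
    [Archimedean G] {p : G → Prop} {c : G} (hc : 0 < c)
    (base : ∀ v, 0 ≤ v → v < c → p v) (step : ∀ v, c ≤ v → p (v - c) → p v)
    (v : G) (hv : 0 ≤ v) : p v := by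
  obtain ⟨n, hn⟩ := exists_lt_nsmul hc v
  induction n generalizing v with
  | zero => exact absurd (zero_nsmul c ▸ hn) hv.not_gt
  | succ n ih =>
    rcases lt_or_ge v c with hvc | hcv
    · exact base v hv hvc
    · exact step v hcv (ih _ (sub_nonneg.2 hcv) (sub_lt_iff_lt_add.2 (succ_nsmul c n ▸ hn)))

section sqInterp

variable {R : Type*} [CommRing R] [LinearOrder R] [FloorRing R]

/-- The piecewise linear interpolation of `x ^ 2` at the integers, encoded as the square plus its
`1`-periodic interpolation error. -/
def sqInterp (x : R) : R := x ^ 2 + fract x * (1 - fract x)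

variable [IsStrictOrderedRing R]

lemma sqInterp_of_mem_Ico {x : R} (hx : x ∈ Ico 0 1) : sqInterp x = x := by
  rw [sqInterp, fract_eq_self.2 hx]
  ring

lemma sqInterp_eq_add_sqInterp_sub_one (x : R) :
    sqInterp x = 2 * x - 1 + sqInterp (x - 1) := by
  simp only [sqInterp, fract_sub_one]
  ring

lemma sqInterp_add_slope_mul_sub_le (x y : R) :
    sqInterp x + (2 * ⌊x⌋ + 1) * (y - x) ≤ sqInterp y := by
  set k : ℤ := ⌊y⌋ - ⌊x⌋ with hk
  have gap : sqInterp y - (sqInterp x + (2 * ⌊x⌋ + 1) * (y - x)) = k * (k - 1 + 2 * fract y) := by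
    simp only [sqInterp, hk, fract, cast_sub]
    ring
  have gap_nonneg : 0 ≤ (k : R) * (k - 1 + 2 * fract y) := by
    have ht₀ : 0 ≤ fract y := fract_nonneg y
    have ht₁ : fract y < 1 := fract_lt_one y
    rcases lt_trichotomy k 0 with hneg | hzero | hpos
    · have : (k : R) ≤ -1 := by exact_mod_cast Int.le_sub_one_of_lt hneg
      exact mul_nonneg_of_nonpos_of_nonpos (by linarith) (by linarith)
    · rw [hzero, cast_zero, zero_mul]
    · have : (1 : R) ≤ k := by exact_mod_cast hpos
      exact mul_nonneg (by linarith) (by linarith)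
  linarith

lemma strictMonoOn_sqInterp : StrictMonoOn (sqInterp : R → R) (Ici 0) := by
  intro x hx y _ hxy
  have slope_pos : (0 : R) < 2 * ⌊x⌋ + 1 := by
    have : (0 : R) ≤ ⌊x⌋ := cast_nonneg (floor_nonneg.2 hx)
    linarith
  calc sqInterp x < sqInterp x + (2 * ⌊x⌋ + 1) * (y - x) :=
        lt_add_of_pos_right _ (mul_pos slope_pos (sub_pos.2 hxy))
    _ ≤ sqInterp y := sqInterp_add_slope_mul_sub_le x y

lemma continuous_sqInterp [TopologicalSpace R] [OrderTopology R] [IsTopologicalRing R] :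
    Continuous (sqInterp : R → R) := by
  have continuous_error : Continuous ((fun t : R ↦ t * (1 - t)) ∘ fract) :=
    ContinuousOn.comp_fract'' (by fun_prop) (by simp)
  exact (continuous_pow 2).add continuous_error

end sqInterp

/-- The closed form of `B_ex`: the braking distance from speed `v` with deceleration `bmax` and
time step `Δt`, extended to all real `v`. At nonnegative multiples of `bmax * Δt` it is the
continuous-time distance `v ^ 2 / (2 * bmax)`. -/
noncomputable def brakingDist (bmax Δt v : ℝ) : ℝ :=
  bmax * Δt ^ 2 / 2 * sqInterp (v / (bmax * Δt))

namespace brakingDist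

variable {bmax Δt v : ℝ}

lemma of_lt (hv₀ : 0 ≤ v) (hv : v < bmax * Δt) : brakingDist bmax Δt v = v * Δt / 2 := by
  have hc : 0 < bmax * Δt := hv₀.trans_lt hv
  have hb : bmax ≠ 0 := left_ne_zero_of_mul hc.ne'
  have ht : Δt ≠ 0 := right_ne_zero_of_mul hc.ne'
  rw [brakingDist, sqInterp_of_mem_Ico ⟨div_nonneg hv₀ hc.le, (div_lt_one hc).2 hv⟩]
  field_simp

lemma eq_add_sub (hb : bmax ≠ 0) (ht : Δt ≠ 0) (v : ℝ) :
    brakingDist bmax Δt v =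
      v * Δt - bmax * Δt ^ 2 / 2 + brakingDist bmax Δt (v - bmax * Δt) := by
  rw [brakingDist, brakingDist, sub_div, div_self (mul_ne_zero hb ht),
    sqInterp_eq_add_sqInterp_sub_one]
  field_simp

lemma strictMonoOn (hb : 0 < bmax) (ht : 0 < Δt) :
    StrictMonoOn (brakingDist bmax Δt) (Ici 0) := by
  intro v hv w hw hvw
  have hc : 0 < bmax * Δt := mul_pos hb ht
  exact mul_lt_mul_of_pos_left
    (strictMonoOn_sqInterp (div_nonneg hv hc.le) (div_nonneg hw hc.le)
      (div_lt_div_of_pos_right hvw hc))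
    (by positivity)

lemma continuous : Continuous (brakingDist bmax Δt) :=
  continuous_const.mul (continuous_sqInterp.comp (continuous_id.div_const _))

end brakingDist

/-- The function `B_ex`, defined by the well-founded recursion
`B_ex v = v·Δt/2` if `0 ≤ v < b_max·Δt` and
`B_ex v = v·Δt − b_max·Δt²/2 + B_ex (v − b_max·Δt)` if `v ≥ b_max·Δt`,
is well-defined on `[0, ∞)` (existence and uniqueness of a function satisfying the
recursion), is a braking function (`B_ex 0 = 0`, `B_ex v ≥ 0` for `v ≥ 0`, strictly
increasing on nonnegative reals), and moreover is continuous on `[0, ∞)`. -/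
theorem Bex_wellDefined_isBraking_continuous
    (bmax Δt : ℝ) (hb : 0 < bmax) (ht : 0 < Δt) :
    ∃ B : ℝ → ℝ,
      -- B satisfies the recursion
      ((∀ v, 0 ≤ v → v < bmax * Δt → B v = v * Δt / 2) ∧
       (∀ v, bmax * Δt ≤ v → B v = v * Δt - bmax * Δt ^ 2 / 2 + B (v - bmax * Δt))) ∧
      -- and it is the unique such function on [0, ∞)
      (∀ B' : ℝ → ℝ,
        (∀ v, 0 ≤ v → v < bmax * Δt → B' v = v * Δt / 2) →
        (∀ v, bmax * Δt ≤ v → B' v = v * Δt - bmax * Δt ^ 2 / 2 + B' (v - bmax * Δt)) →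
        ∀ v, 0 ≤ v → B' v = B v) ∧
      -- B is a braking function
      (B 0 = 0) ∧
      (∀ v, 0 ≤ v → 0 ≤ B v) ∧
      (∀ v₁ v₂, v₂ < v₁ → 0 ≤ v₂ → B v₂ < B v₁) ∧
      -- and B is continuous on [0, ∞)
      ContinuousOn B (Set.Ici (0 : ℝ)) := by
  have hc : 0 < bmax * Δt := mul_pos hb ht
  have base {v : ℝ} := brakingDist.of_lt (bmax := bmax) (Δt := Δt) (v := v)
  have step := brakingDist.eq_add_sub hb.ne' ht.ne'
  have mono := brakingDist.strictMonoOn hb ht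
  have zero : brakingDist bmax Δt 0 = 0 := by rw [base le_rfl hc, zero_mul, zero_div]
  refine ⟨brakingDist bmax Δt, ⟨fun _ ↦ base, fun v _ ↦ step v⟩, ?unique, zero, ?nonneg,
    fun v₁ v₂ hlt hv₂ ↦ mono hv₂ (hv₂.trans hlt.le) hlt, brakingDist.continuous.continuousOn⟩
  case unique =>
    intro B' base' step'
    refine nonneg_induction_of_sub hc (fun v hv₀ hv ↦ ?_) fun v hv ih ↦ ?_
    · rw [base' v hv₀ hv, base hv₀ hv]
    · rw [step' v hv, step v, ih]
  case nonneg =>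
    exact fun v hv ↦ zero.ge.trans (mono.monotoneOn self_mem_Ici hv hv)
end

section
/- For all v ≥ 0, v²/(2·b_max) ≤ B_ex(v) ≤ v²/(2·b_max) + v·Δt/2; moreover, B_ex(n·b_max·Δt) = n²·b_max·Δt²/2 for every natural number n. -/
/-!
The increment `v * Δt - bmax * Δt ^ 2 / 2` in the recursion is exactly the increment of
`v ^ 2 / (2 * bmax)` over one period `bmax * Δt`, so the defect `Bex v - v ^ 2 / (2 * bmax)` is
unchanged when `v` is reduced modulo `bmax * Δt`. At the residue `r` it equals
`r * (bmax * Δt - r) / (2 * bmax)`, which lies between `0` and `r * Δt / 2` and vanishes at `r = 0`.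
-/

section LinearOrderedAddCommGroup

variable {α β : Type*} [AddCommGroup α] [LinearOrder α] [IsOrderedAddMonoid α]
  {f : α → β} {a p x : α}

theorem apply_add_nsmul_eq_of_apply_sub_eq (hp : 0 ≤ p)
    (hf : ∀ y, a + p ≤ y → f (y - p) = f y) (hx : a ≤ x) (n : ℕ) : f (x + n • p) = f x := by
  induction n with
  | zero => rw [zero_nsmul, add_zero]
  | succ n ih =>
    have hle : a + p ≤ x + n • p + p := by
      gcongr
      exact hx.trans (le_add_of_nonneg_right (nsmul_nonneg hp n))
    rw [succ_nsmul, ← add_assoc, ← hf _ hle, add_sub_cancel_right, ih]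

variable [Archimedean α]

theorem toIcoDiv_nonneg (hp : 0 < p) (hx : a ≤ x) : 0 ≤ toIcoDiv hp a x := by
  have hlt : (-1 : ℤ) • p < toIcoDiv hp a x • p := by
    rw [neg_one_zsmul, ← self_sub_toIcoMod, neg_lt_sub_iff_lt_add']
    exact (toIcoMod_lt_right hp a x).trans_le (by gcongr)
  exact Int.add_one_le_of_lt ((zsmul_lt_zsmul_iff_left hp).mp hlt)

theorem toIcoMod_le_self (hp : 0 < p) (hx : a ≤ x) : toIcoMod hp a x ≤ x := by
  rw [← sub_nonneg, self_sub_toIcoMod]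
  exact zsmul_nonneg hp.le (toIcoDiv_nonneg hp hx)

theorem apply_toIcoMod_eq_of_apply_sub_eq (hp : 0 < p)
    (hf : ∀ y, a + p ≤ y → f (y - p) = f y) (hx : a ≤ x) : f (toIcoMod hp a x) = f x := by
  obtain ⟨n, hn⟩ := Int.eq_ofNat_of_zero_le (toIcoDiv_nonneg hp hx)
  have hdecomp : toIcoMod hp a x + n • p = x := by
    rw [← natCast_zsmul, ← hn, toIcoMod_add_toIcoDiv_zsmul]
  rw [← apply_add_nsmul_eq_of_apply_sub_eq hp.le hf (left_le_toIcoMod hp a x) n, hdecomp]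

end LinearOrderedAddCommGroup

section BexRecursion

variable {K : Type*} [Field K] [LinearOrder K] [IsStrictOrderedRing K] [Archimedean K]
  {bmax Δt : K} {Bex : K → K}

theorem Bex_eq_sq_div_add_toIcoMod (hp : 0 < bmax * Δt)
    (hBex1 : ∀ v, 0 ≤ v → v < bmax * Δt → Bex v = v * Δt / 2)
    (hBex2 : ∀ v, bmax * Δt ≤ v → Bex v = v * Δt - bmax * Δt ^ 2 / 2 + Bex (v - bmax * Δt))
    {v : K} (hv : 0 ≤ v) :
    Bex v = v ^ 2 / (2 * bmax) +
      toIcoMod hp 0 v * (bmax * Δt - toIcoMod hp 0 v) / (2 * bmax) := by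
  have hb : bmax ≠ 0 := left_ne_zero_of_mul hp.ne'
  have hperiodic : ∀ w, 0 + bmax * Δt ≤ w →
      Bex (w - bmax * Δt) - (w - bmax * Δt) ^ 2 / (2 * bmax) = Bex w - w ^ 2 / (2 * bmax) := by
    intro w hw
    rw [hBex2 w (by rwa [zero_add] at hw)]
    field_simp
    ring
  have hreduce := apply_toIcoMod_eq_of_apply_sub_eq
    (f := fun w ↦ Bex w - w ^ 2 / (2 * bmax)) hp hperiodic hv
  obtain ⟨hr0, hrp⟩ := toIcoMod_mem_Ico' hp v
  rw [← sub_eq_iff_eq_add', ← hreduce, hBex1 _ hr0 hrp]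
  field_simp

theorem sq_div_le_Bex (hb : 0 < bmax) (ht : 0 < Δt)
    (hBex1 : ∀ v, 0 ≤ v → v < bmax * Δt → Bex v = v * Δt / 2)
    (hBex2 : ∀ v, bmax * Δt ≤ v → Bex v = v * Δt - bmax * Δt ^ 2 / 2 + Bex (v - bmax * Δt))
    {v : K} (hv : 0 ≤ v) : v ^ 2 / (2 * bmax) ≤ Bex v := by
  have hp : 0 < bmax * Δt := mul_pos hb ht
  obtain ⟨hr0, hrp⟩ := toIcoMod_mem_Ico' hp v
  rw [Bex_eq_sq_div_add_toIcoMod hp hBex1 hBex2 hv]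
  exact le_add_of_nonneg_right
    (div_nonneg (mul_nonneg hr0 (sub_nonneg.mpr hrp.le)) (by positivity))

theorem Bex_le_sq_div_add (hb : 0 < bmax) (ht : 0 < Δt)
    (hBex1 : ∀ v, 0 ≤ v → v < bmax * Δt → Bex v = v * Δt / 2)
    (hBex2 : ∀ v, bmax * Δt ≤ v → Bex v = v * Δt - bmax * Δt ^ 2 / 2 + Bex (v - bmax * Δt))
    {v : K} (hv : 0 ≤ v) : Bex v ≤ v ^ 2 / (2 * bmax) + v * Δt / 2 := by
  have hp : 0 < bmax * Δt := mul_pos hb ht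
  obtain ⟨hr0, hrp⟩ := toIcoMod_mem_Ico' hp v
  have hrv : toIcoMod hp 0 v ≤ v := toIcoMod_le_self hp hv
  calc Bex v
      = v ^ 2 / (2 * bmax) + toIcoMod hp 0 v * (bmax * Δt - toIcoMod hp 0 v) / (2 * bmax) :=
        Bex_eq_sq_div_add_toIcoMod hp hBex1 hBex2 hv
    _ ≤ v ^ 2 / (2 * bmax) + v * (bmax * Δt) / (2 * bmax) := by
        gcongr
        exact sub_le_self _ hr0
    _ = v ^ 2 / (2 * bmax) + v * Δt / 2 := by field_simp

theorem Bex_natCast_mul (hp : 0 < bmax * Δt)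
    (hBex1 : ∀ v, 0 ≤ v → v < bmax * Δt → Bex v = v * Δt / 2)
    (hBex2 : ∀ v, bmax * Δt ≤ v → Bex v = v * Δt - bmax * Δt ^ 2 / 2 + Bex (v - bmax * Δt))
    (n : ℕ) : Bex (n * bmax * Δt) = (n : K) ^ 2 * bmax * Δt ^ 2 / 2 := by
  have hb : bmax ≠ 0 := left_ne_zero_of_mul hp.ne'
  have hmod : toIcoMod hp 0 (n * (bmax * Δt)) = 0 := by
    rw [← nsmul_eq_mul, ← zero_add (n • _), toIcoMod_add_nsmul, toIcoMod_apply_left]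
  rw [mul_assoc, Bex_eq_sq_div_add_toIcoMod hp hBex1 hBex2 (by positivity), hmod]
  field_simp
  ring

theorem Bex_bounds_and_exact_values_general (hb : 0 < bmax) (ht : 0 < Δt)
    (hBex1 : ∀ v, 0 ≤ v → v < bmax * Δt → Bex v = v * Δt / 2)
    (hBex2 : ∀ v, bmax * Δt ≤ v → Bex v = v * Δt - bmax * Δt ^ 2 / 2 + Bex (v - bmax * Δt)) :
    (∀ v, 0 ≤ v →
      v ^ 2 / (2 * bmax) ≤ Bex v ∧ Bex v ≤ v ^ 2 / (2 * bmax) + v * Δt / 2) ∧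
    ∀ n : ℕ, Bex (n * bmax * Δt) = (n : K) ^ 2 * bmax * Δt ^ 2 / 2 :=
  ⟨fun _ hv ↦ ⟨sq_div_le_Bex hb ht hBex1 hBex2 hv, Bex_le_sq_div_add hb ht hBex1 hBex2 hv⟩,
    Bex_natCast_mul (mul_pos hb ht) hBex1 hBex2⟩

end BexRecursion

/-- for every `v ≥ 0`, `v²/(2·b_max) ≤ B_ex v ≤ v²/(2·b_max) + v·Δt/2`;
moreover `B_ex (n·b_max·Δt) = n²·b_max·Δt²/2` for every natural number `n`.
Here `B_ex` is any function satisfying the defining recursion. -/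
theorem Bex_bounds_and_exact_values
    (bmax Δt : ℝ) (hb : 0 < bmax) (ht : 0 < Δt)
    (Bex : ℝ → ℝ)
    (hBex1 : ∀ v, 0 ≤ v → v < bmax * Δt → Bex v = v * Δt / 2)
    (hBex2 : ∀ v, bmax * Δt ≤ v → Bex v = v * Δt - bmax * Δt ^ 2 / 2 + Bex (v - bmax * Δt)) :
    (∀ v, 0 ≤ v →
      v ^ 2 / (2 * bmax) ≤ Bex v ∧ Bex v ≤ v ^ 2 / (2 * bmax) + v * Δt / 2) ∧
    ∀ n : ℕ, Bex (n * bmax * Δt) = (n : ℝ) ^ 2 * bmax * Δt ^ 2 / 2 :=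
  Bex_bounds_and_exact_values_general hb ht hBex1 hBex2
end

section
/- Let B be a braking function. Let x ≤ x' be reals, let P, P' be reals, let V, V' ≥ 0 be reals, and let S, S' be finite sets of pairs (q, U) of reals with U ≥ 0. Define l := min(P, x + B(V), min_{(q,U)∈S}(q + B(U))) and l' := min(P', x' + B(V'), min_{(r,W)∈S'}(r + B(W))) (where the minimum over an empty set is omitted). Assume: (a) P ≤ P' or x' + B(V') ≤ P'; (b) V' = V, or there exists (q, U) ∈ S with U = V' and q ≤ x'; (c) every (r, W) ∈ S' either belongs to S or satisfies P ≤ r. Then l ≤ l'; that is, the limit position (and hence the free space) is non-retracting. -/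
/-- The limit position `l = min (P, x + B V, min_{(q,U) ∈ S} (q + B U))`, computed in
`EReal` so that the minimum over an empty set of signs is simply omitted (it is `⊤`). -/
noncomputable def limitPos (B : ℝ → ℝ) (P x V : ℝ) (S : Finset (ℝ × ℝ)) : EReal :=
  min (min (P : EReal) ((x + B V : ℝ) : EReal))
    (S.inf fun p => ((p.1 + B p.2 : ℝ) : EReal))

theorem IsBraking.nonneg {B : ℝ → ℝ} (hB : IsBraking B) {v : ℝ} (hv : 0 ≤ v) : 0 ≤ B v :=
  hB.2.1 v hv

section

variable {B : ℝ → ℝ} {P x V : ℝ} {S : Finset (ℝ × ℝ)}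

theorem le_limitPos_iff {a : EReal} :
    a ≤ limitPos B P x V S ↔
      a ≤ (P : EReal) ∧ a ≤ ((x + B V : ℝ) : EReal) ∧
        ∀ p ∈ S, a ≤ ((p.1 + B p.2 : ℝ) : EReal) := by
  simp only [limitPos, le_min_iff, Finset.le_inf_iff, and_assoc]

theorem limitPos_le_of_lead_le {b : ℝ} (h : P ≤ b) : limitPos B P x V S ≤ (b : EReal) :=
  (le_limitPos_iff.1 le_rfl).1.trans (EReal.coe_le_coe h)

theorem limitPos_le_of_pos_add_le {b : ℝ} (h : x + B V ≤ b) : limitPos B P x V S ≤ (b : EReal) :=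
  (le_limitPos_iff.1 le_rfl).2.1.trans (EReal.coe_le_coe h)

theorem limitPos_le_of_sign_add_le {b : ℝ} {p : ℝ × ℝ} (hp : p ∈ S) (h : p.1 + B p.2 ≤ b) :
    limitPos B P x V S ≤ (b : EReal) :=
  ((le_limitPos_iff.1 le_rfl).2.2 p hp).trans (EReal.coe_le_coe h)

theorem limitPos_le_pos_add_of_advance {x' V' : ℝ} (hx : x ≤ x')
    (hV' : V' = V ∨ ∃ p ∈ S, p.2 = V' ∧ p.1 ≤ x') :
    limitPos B P x V S ≤ ((x' + B V' : ℝ) : EReal) := by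
  rcases hV' with rfl | ⟨p, hp, rfl, hpx'⟩
  · exact limitPos_le_of_pos_add_le (by gcongr)
  · exact limitPos_le_of_sign_add_le hp (by gcongr)

theorem limitPos_le_sign_add {p : ℝ × ℝ} (hB : 0 ≤ B p.2) (hp : p ∈ S ∨ P ≤ p.1) :
    limitPos B P x V S ≤ ((p.1 + B p.2 : ℝ) : EReal) := by
  rcases hp with hpS | hPp
  · exact limitPos_le_of_sign_add_le hpS le_rfl
  · exact limitPos_le_of_lead_le (le_add_of_le_of_nonneg hPp hB)

theorem limit_position_nonretracting_general {x' P' V' : ℝ} {S' : Finset (ℝ × ℝ)}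
    (hB : ∀ p ∈ S', 0 ≤ B p.2) (hx : x ≤ x')
    (ha : P ≤ P' ∨ x' + B V' ≤ P')
    (hb : V' = V ∨ ∃ p ∈ S, p.2 = V' ∧ p.1 ≤ x')
    (hc : ∀ p ∈ S', p ∈ S ∨ P ≤ p.1) :
    limitPos B P x V S ≤ limitPos B P' x' V' S' := by
  have le_pos_add : limitPos B P x V S ≤ ((x' + B V' : ℝ) : EReal) :=
    limitPos_le_pos_add_of_advance hx hb
  have le_lead : limitPos B P x V S ≤ (P' : EReal) :=
    ha.elim limitPos_le_of_lead_le fun h => le_pos_add.trans (EReal.coe_le_coe h)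
  exact le_limitPos_iff.2
    ⟨le_lead, le_pos_add, fun p hp => limitPos_le_sign_add (hB p hp) (hc p hp)⟩

end

/-- the limit position (and hence the free space) is non-retracting.
Given a braking function `B`, positions `x ≤ x'`, front lead positions `P, P'`, speed
limits `V, V' ≥ 0` and finite sets of speed-limit signs `S, S'` (pairs `(q, U)` with
`U ≥ 0`), if (a) `P ≤ P'` or `x' + B V' ≤ P'`; (b) `V' = V` or some `(q, U) ∈ S` has
`U = V'` and `q ≤ x'`; (c) every `(r, W) ∈ S'` belongs to `S` or satisfies `P ≤ r`;
then `l ≤ l'`. -/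
theorem limit_position_nonretracting
    (B : ℝ → ℝ) (hB : IsBraking B)
    (x x' P P' V V' : ℝ) (S S' : Finset (ℝ × ℝ))
    (hx : x ≤ x') (hV : 0 ≤ V) (hV' : 0 ≤ V')
    (hS : ∀ p ∈ S, 0 ≤ p.2) (hS' : ∀ p ∈ S', 0 ≤ p.2)
    (ha : P ≤ P' ∨ x' + B V' ≤ P')
    (hb : V' = V ∨ ∃ p ∈ S, p.2 = V' ∧ p.1 ≤ x')
    (hc : ∀ p ∈ S', p ∈ S ∨ P ≤ p.1) :
    limitPos B P x V S ≤ limitPos B P' x' V' S' := by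
  exact limit_position_nonretracting_general (fun p hp => hB.nonneg (hS' p hp)) hx ha hb hc
end

section
/- Let B be a braking function and C a speed control function for B. If v ≥ 0 is controllable with respect to VL = ⟨(d_i, V_i)⟩_{i=0,…,n} and (Δv, Δd) := C(v, VL), then v + Δv ≥ 0 and v + Δv is controllable with respect to the updated list update(VL, Δd); that is, B(v + Δv) ≤ max(d_i − Δd, 0) + B(V_i) for every i ∈ {0,…,n} with Δd < d_{i+1}. -/
theorem apply_le_max_sub_zero_add_apply {S G : Type*} [Preorder S] [AddCommGroup G] [LinearOrder G]
    [IsOrderedAddMonoid G] {B : S → G} {s : Set S} (hB : MonotoneOn B s) {w V : S} (hw : w ∈ s)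
    (hV : V ∈ s) {d δ : G} (hcur : d ≤ δ → w ≤ V) (hahead : δ ≤ d → δ + B w ≤ d + B V) :
    B w ≤ max (d - δ) 0 + B V := by
  rcases le_total d δ with hle | hge
  · calc
      B w ≤ B V := hB hw hV (hcur hle)
      _ ≤ max (d - δ) 0 + B V := le_add_of_nonneg_left (le_max_right _ _)
  · calc
      B w ≤ d + B V - δ := le_sub_iff_add_le'.mpr (hahead hge)
      _ = d - δ + B V := add_sub_right_comm _ _ _
      _ ≤ max (d - δ) 0 + B V := by gcongr; exact le_max_left _ _

theorem controllable_after_step_general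
    {B : ℝ → ℝ} (hB : MonotoneOn B (Set.Ici 0))
    {C : ℝ → List (ℝ × ℝ) → ℝ × ℝ} (hC : IsSpeedControl B C)
    {v : ℝ} {VL : List (ℝ × ℝ)}
    (hv : 0 ≤ v) (hVL : ValidVL VL) (hctrl : Controllable B v VL) :
    0 ≤ v + (C v VL).1 ∧
    ∀ i : Fin VL.length,
      (∀ h : (i : ℕ) + 1 < VL.length, (C v VL).2 < (VL.get ⟨(i : ℕ) + 1, h⟩).1) →
      B (v + (C v VL).1) ≤ max ((VL.get i).1 - (C v VL).2) 0 + B ((VL.get i).2) := by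
  obtain ⟨hspeed, -, hcur, hahead, -⟩ := hC v VL hv hVL hctrl
  obtain ⟨-, -, -, hlimit⟩ := hVL
  refine ⟨hspeed, fun i hkept => ?_⟩
  have hmem : VL.get i ∈ VL := VL.get_mem i
  exact apply_le_max_sub_zero_add_apply hB hspeed (hlimit _ hmem)
    (fun hle => hcur i hle hkept) (hahead _ hmem)

/-- if `v ≥ 0` is controllable with respect to `VL` and
`(Δv, Δd) = C v VL`, then `v + Δv ≥ 0` and `v + Δv` is controllable with respect to the
updated list `update (VL, Δd)`; that is, `B (v + Δv) ≤ max (d_i − Δd) 0 + B V_i` for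
every `i` with `Δd < d_{i+1}` (with the convention `d_{n+1} = +∞`). -/
theorem controllable_after_step
    (B : ℝ → ℝ) (hB : IsBraking B)
    (C : ℝ → List (ℝ × ℝ) → ℝ × ℝ) (hC : IsSpeedControl B C)
    (v : ℝ) (VL : List (ℝ × ℝ))
    (hv : 0 ≤ v) (hVL : ValidVL VL) (hctrl : Controllable B v VL) :
    0 ≤ v + (C v VL).1 ∧
    ∀ i : Fin VL.length,
      (∀ h : (i : ℕ) + 1 < VL.length, (C v VL).2 < (VL.get ⟨(i : ℕ) + 1, h⟩).1) →
      B (v + (C v VL).1) ≤ max ((VL.get i).1 - (C v VL).2) 0 + B ((VL.get i).2) :=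
  controllable_after_step_general hB.strictMonoOn.monotoneOn hC hv hVL hctrl
end
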